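/- Let 1 ≤ k ≤ n, m ≥ 1, π ∈ (0,1], α > 0, and let V = (V_1,…,V_m) have the lightly planted law P_{planted,π}. Then P_{planted,π}( σ(V) < ((1 − 2^{−k}) + π 2^{−k} − α) m ) ≤ exp(−2 α² m). -/

import Mathlib

open scoped BigOperators Classical
open Filter Topology

abbrev F2n (n : ℕ) := Fin n → ZMod 2

def IsFlat (n k : ℕ) (W : Set (F2n n)) : Prop :=
  ∃ A : AffineSubspace (ZMod 2) (F2n n),
    (A : Set (F2n n)) = W ∧ W.Nonempty ∧ Module.finrank (ZMod 2) A.direction = n - k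

def Flat (n k : ℕ) : Type := {W : Set (F2n n) // IsFlat n k W}

noncomputable instance (n k : ℕ) : Fintype (Flat n k) := by
  unfold Flat; exact Fintype.ofFinite _

noncomputable def q0 (n k : ℕ) : Flat n k → ℝ :=
  fun _ => (Fintype.card (Flat n k) : ℝ)⁻¹

noncomputable def qx (n k : ℕ) (x : F2n n) : Flat n k → ℝ :=
  fun W => if x ∈ W.1 then 0 else (Nat.card {W : Flat n k // x ∉ W.1} : ℝ)⁻¹

noncomputable def prob {α : Type*} [Fintype α] (p : α → ℝ) (E : Set α) : ℝ :=
  ∑ a, if a ∈ E then p a else 0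

noncomputable def expect {α : Type*} [Fintype α] (p : α → ℝ) (f : α → ℝ) : ℝ :=
  ∑ a, p a * f a

noncomputable def Punif (n k m : ℕ) : (Fin m → Flat n k) → ℝ :=
  fun V => ∏ j, q0 n k (V j)

noncomputable def Pplanted (n k m : ℕ) : (Fin m → Flat n k) → ℝ :=
  fun V => ((2:ℝ)^n)⁻¹ * ∑ x : F2n n, ∏ j, qx n k x (V j)

noncomputable def Z (n k m : ℕ) (V : Fin m → Flat n k) : ℕ :=
  Nat.card {x : F2n n // ∀ j, x ∉ (V j).1}

noncomputable def satCount (n k m : ℕ) (V : Fin m → Flat n k) (x : F2n n) : ℕ :=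
  Nat.card {j : Fin m // x ∉ (V j).1}

noncomputable def maxSat (n k m : ℕ) (V : Fin m → Flat n k) : ℕ :=
  Finset.univ.sup (fun x : F2n n => satCount n k m V x)

noncomputable def qxpi (n k : ℕ) (x : F2n n) (π : ℝ) : Flat n k → ℝ :=
  fun W => (1 - π) * q0 n k W + π * qx n k x W

noncomputable def Pplantedpi (n k m : ℕ) (π : ℝ) : (Fin m → Flat n k) → ℝ :=
  fun V => ((2:ℝ)^n)⁻¹ * ∑ x : F2n n, ∏ j, qxpi n k x π (V j)

noncomputable def DeltaK (k : ℕ) : ℝ :=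
  Real.log (1/2) / Real.log (1 - ((2:ℝ)^k)⁻¹)

lemma bern_mgf (p t : ℝ) (h0 : 0 ≤ p) (h1 : p ≤ 1) :
    (1 - p) + p * Real.exp (-t) ≤ Real.exp (-t * p + t ^ 2 / 8) := by
  have h1' : 0 ≤ 1 - p := by linarith
  let μ : MeasureTheory.Measure ℝ :=
    ENNReal.ofReal p • MeasureTheory.Measure.dirac 1
      + ENNReal.ofReal (1 - p) • MeasureTheory.Measure.dirac 0
  have hμ : MeasureTheory.IsProbabilityMeasure μ := by
    constructor
    simp only [μ, MeasureTheory.Measure.add_apply, MeasureTheory.Measure.smul_apply,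
      MeasureTheory.measure_univ, smul_eq_mul, mul_one]
    rw [← ENNReal.ofReal_add h0 h1']
    simp
  have hint : ∀ f : ℝ → ℝ, ∫ x, f x ∂μ = p * f 1 + (1 - p) * f 0 := by
    intro f
    have hd : ∀ a : ℝ, MeasureTheory.Integrable f (MeasureTheory.Measure.dirac a) := fun a =>
      MeasureTheory.integrable_dirac (by simp)
    rw [MeasureTheory.integral_add_measure
      ((hd 1).smul_measure ENNReal.ofReal_ne_top) ((hd 0).smul_measure ENNReal.ofReal_ne_top)]
    simp [MeasureTheory.integral_smul_measure, ENNReal.toReal_ofReal h0,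
      ENNReal.toReal_ofReal h1']
  have hb : ∀ᵐ ω ∂μ, (fun x : ℝ => x) ω ∈ Set.Icc (0:ℝ) 1 := by
    rw [MeasureTheory.ae_add_measure_iff]
    constructor
    · apply MeasureTheory.Measure.ae_smul_measure
      rw [MeasureTheory.ae_dirac_eq]; simp
    · apply MeasureTheory.Measure.ae_smul_measure
      rw [MeasureTheory.ae_dirac_eq]; simp
  have H := (ProbabilityTheory.hasSubgaussianMGF_of_mem_Icc (μ := μ) (X := fun x : ℝ => x)
    aemeasurable_id' hb).mgf_le (-t)
  have he : ∫ x, (fun x : ℝ => x) x ∂μ = p := by rw [hint]; ring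
  rw [ProbabilityTheory.mgf, hint, he] at H
  have e1 : Real.exp (-t * (1 - p)) = Real.exp (t * p) * Real.exp (-t) := by
    rw [← Real.exp_add]; ring_nf
  have e2 : Real.exp (-t * (0 - p)) = Real.exp (t * p) := by ring_nf
  rw [e1, e2] at H
  have e3 : Real.exp (-t * p + t ^ 2 / 8) = Real.exp (-(t * p)) * Real.exp (t ^ 2 / 8) := by
    rw [← Real.exp_add]; ring_nf
  have e4 : Real.exp (-(t * p)) * Real.exp (t * p) = 1 := by
    rw [← Real.exp_add]; simp
  have e5 : ((((‖(1:ℝ) - 0‖₊ / 2) ^ 2 : NNReal) : ℝ)) * (-t) ^ 2 / 2 = t ^ 2 / 8 := by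
    simp; ring
  rw [e5] at H
  rw [e3]
  have := mul_le_mul_of_nonneg_left H (Real.exp_pos (-(t * p))).le
  calc _ = (Real.exp (-(t * p)) * Real.exp (t * p)) * ((1 - p) + p * Real.exp (-t)) := by
        rw [e4]; ring
    _ ≤ _ := by linarith

lemma flat_translate (n k : ℕ) (v : F2n n) (W : Set (F2n n)) (h : IsFlat n k W) :
    IsFlat n k ((fun y => v + y) '' W) := by
  obtain ⟨A, hA, hne, hd⟩ := h
  refine ⟨A.map (AffineEquiv.constVAdd (ZMod 2) (F2n n) v).toAffineMap, ?_, hne.image _, ?_⟩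
  · rw [AffineSubspace.coe_map, hA]; rfl
  · rw [AffineSubspace.map_direction]
    have : (AffineEquiv.constVAdd (ZMod 2) (F2n n) v).toAffineMap.linear = LinearMap.id := rfl
    rw [this, Submodule.map_id, hd]

instance flatFinite (n k : ℕ) : Finite (Flat n k) := Finite.of_fintype _

lemma card_le_card (n k : ℕ) (x y : F2n n) :
    Nat.card {W : Flat n k // x ∈ W.1} ≤ Nat.card {W : Flat n k // y ∈ W.1} := by
  refine Nat.card_le_card_of_injective
    (fun W => ⟨⟨(fun z => (y - x) + z) '' W.1.1, flat_translate n k _ _ W.1.2⟩,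
      ⟨x, W.2, by simp⟩⟩) ?_
  intro W W' h
  have h' := congrArg (fun U => U.1.1) h
  have := (Set.image_injective.2 (add_right_injective (y - x))) h'
  exact Subtype.ext (Subtype.ext this)

lemma flat_card (n k : ℕ) (W : Flat n k) : Nat.card {x : F2n n // x ∈ W.1} = 2 ^ (n - k) := by
  obtain ⟨W, A, hA, ⟨w, hw⟩, hd⟩ := W
  subst hA
  have hw' : w ∈ A := hw
  have e : Nat.card A.direction = Nat.card {x : F2n n // x ∈ (A : Set (F2n n))} := by
    refine Nat.card_congr (Equiv.ofBijective (fun v => ⟨v.1 +ᵥ w,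
      AffineSubspace.vadd_mem_of_mem_direction v.2 hw'⟩) ⟨?_, ?_⟩)
    · intro a b h
      have := congrArg Subtype.val h
      exact Subtype.ext (vadd_right_cancel w this)
    · rintro ⟨z, hz⟩
      exact ⟨⟨z -ᵥ w, AffineSubspace.vsub_mem_direction hz hw'⟩, by simp⟩
  show Nat.card {x : F2n n // x ∈ (A : Set (F2n n))} = _
  rw [← e, Module.natCard_eq_pow_finrank (K := ZMod 2), hd, Nat.card_zmod]

lemma flat_nonempty (n k : ℕ) : Nonempty (Flat n k) := by
  obtain ⟨f, hf⟩ := exists_linearIndependent_of_le_finrank (R := ZMod 2) (M := F2n n)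
    (n := n - k) (by simp)
  refine ⟨⟨_, (Submodule.span (ZMod 2) (Set.range f)).toAffineSubspace, rfl, ⟨0, ?_⟩, ?_⟩⟩
  · simp
  · rw [Submodule.toAffineSubspace_direction, finrank_span_eq_card hf]; simp

lemma card_mem (n k : ℕ) (hkn : k ≤ n) (x : F2n n) :
    2 ^ k * Nat.card {W : Flat n k // x ∈ W.1} = Fintype.card (Flat n k) := by
  have h1 : ∀ y : F2n n, Nat.card {W : Flat n k // y ∈ W.1}
      = Nat.card {W : Flat n k // x ∈ W.1} :=
    fun y => le_antisymm (card_le_card n k y x) (card_le_card n k x y)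
  have e : Nat.card (Σ y : F2n n, {W : Flat n k // y ∈ W.1})
      = Nat.card (Σ W : Flat n k, {y : F2n n // y ∈ W.1}) :=
    Nat.card_congr
      { toFun := fun a => ⟨a.2.1, a.1, a.2.2⟩
        invFun := fun a => ⟨a.2.1, a.1, a.2.2⟩
        left_inv := fun _ => rfl
        right_inv := fun _ => rfl }
  rw [Nat.card_sigma, Nat.card_sigma] at e
  simp only [h1, flat_card, Finset.sum_const, Finset.card_univ, smul_eq_mul] at e
  have h2 : Fintype.card (F2n n) = 2 ^ (n - k) * 2 ^ k := by
    rw [← pow_add, Nat.sub_add_cancel hkn]; simp [F2n]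
  rw [h2] at e
  have : 0 < 2 ^ (n - k) := by positivity
  apply Nat.eq_of_mul_eq_mul_left this
  rw [← mul_assoc, e, mul_comm]

lemma card_split (n k : ℕ) (x : F2n n) :
    Nat.card {W : Flat n k // x ∈ W.1} + Nat.card {W : Flat n k // x ∉ W.1}
      = Fintype.card (Flat n k) := by
  rw [← Nat.card_eq_fintype_card, ← Nat.card_sum]
  exact Nat.card_congr (Equiv.sumCompl (fun W : Flat n k => x ∈ W.1))

lemma sum_split (n k : ℕ) (x : F2n n) (a b : ℝ) :
    ∑ W : Flat n k, (if x ∈ W.1 then a else b)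
      = Nat.card {W : Flat n k // x ∈ W.1} * a + Nat.card {W : Flat n k // x ∉ W.1} * b := by
  rw [Finset.sum_ite, Finset.sum_const, Finset.sum_const, nsmul_eq_mul, nsmul_eq_mul,
    Nat.card_eq_fintype_card, Nat.card_eq_fintype_card, Fintype.card_subtype,
    Fintype.card_subtype]

lemma one_sum (n k : ℕ) (hk : 1 ≤ k) (hkn : k ≤ n) (x : F2n n) (π c : ℝ) :
    ∑ W : Flat n k, qxpi n k x π W * (if x ∈ W.1 then 1 else c)
      = (1 - ((1 - ((2:ℝ)^k)⁻¹) + π * ((2:ℝ)^k)⁻¹))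
        + ((1 - ((2:ℝ)^k)⁻¹) + π * ((2:ℝ)^k)⁻¹) * c := by
  have hs := card_split n k x
  have hm := card_mem n k hkn x
  have hN : 0 < Fintype.card (Flat n k) := Fintype.card_pos_iff.2 (flat_nonempty n k)
  have h2 : 2 ≤ 2 ^ k := by
    calc 2 = 2 ^ 1 := by norm_num
      _ ≤ 2 ^ k := Nat.pow_le_pow_right (by norm_num) hk
  have hb : 0 < Nat.card {W : Flat n k // x ∉ W.1} := by nlinarith
  have : ∀ W : Flat n k, qxpi n k x π W * (if x ∈ W.1 then 1 else c)
      = if x ∈ W.1 then (1 - π) * (Fintype.card (Flat n k) : ℝ)⁻¹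
        else ((1 - π) * (Fintype.card (Flat n k) : ℝ)⁻¹
          + π * (Nat.card {W : Flat n k // x ∉ W.1} : ℝ)⁻¹) * c := by
    intro W
    unfold qxpi q0 qx
    split_ifs <;> ring
  rw [Finset.sum_congr rfl (fun W _ => this W), sum_split]
  generalize Nat.card {W : Flat n k // x ∉ W.1} = B at *
  generalize Nat.card {W : Flat n k // x ∈ W.1} = A at *
  generalize Fintype.card (Flat n k) = N at *
  have hsR : (A : ℝ) + B = N := by exact_mod_cast hs
  have hmR : (2:ℝ) ^ k * A = N := by exact_mod_cast hm
  have hNR : (N : ℝ) ≠ 0 := by positivity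
  have hBR : (B : ℝ) ≠ 0 := by positivity
  have hp : (2:ℝ) ^ k ≠ 0 := by positivity
  have hA : (A : ℝ) * (N : ℝ)⁻¹ = ((2:ℝ) ^ k)⁻¹ := by
    rw [← hmR]
    have : (A : ℝ) ≠ 0 := by rintro h; rw [h] at hmR; simp at hmR; exact hNR hmR.symm
    field_simp
  have hB : (B : ℝ) * (N : ℝ)⁻¹ = 1 - ((2:ℝ) ^ k)⁻¹ := by
    rw [← hA, ← mul_inv_cancel₀ hNR]
    nth_rewrite 2 [← hsR]; ring
  calc _ = (1 - π) * ((A : ℝ) * (N : ℝ)⁻¹) + ((1 - π) * ((B : ℝ) * (N : ℝ)⁻¹)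
        + π * ((B : ℝ) * (B : ℝ)⁻¹)) * c := by ring
    _ = _ := by rw [hA, hB, mul_inv_cancel₀ hBR]; ring

lemma qxpi_nonneg (n k : ℕ) (x : F2n n) (π : ℝ) (h0 : 0 < π) (h1 : π ≤ 1) (W : Flat n k) :
    0 ≤ qxpi n k x π W := by
  have : 0 ≤ 1 - π := by linarith
  unfold qxpi q0 qx
  split_ifs <;> positivity

lemma exp_sat (n k m : ℕ) (V : Fin m → Flat n k) (x : F2n n) (t : ℝ) :
    Real.exp (-t * satCount n k m V x) = ∏ j, (if x ∈ (V j).1 then 1 else Real.exp (-t)) := by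
  rw [Finset.prod_ite, Finset.prod_const, Finset.prod_const, one_pow, one_mul, ← Real.exp_nat_mul,
    satCount, Nat.card_eq_fintype_card, Fintype.card_subtype, mul_comm]

theorem stmt16 (n k m : ℕ) (hk : 1 ≤ k) (hkn : k ≤ n) (hm : 1 ≤ m)
    (π : ℝ) (hπ0 : 0 < π) (hπ1 : π ≤ 1) (α : ℝ) (hα : 0 < α) :
    prob (Pplantedpi n k m π)
        {V | (maxSat n k m V : ℝ) < ((1 - ((2:ℝ)^k)⁻¹) + π * ((2:ℝ)^k)⁻¹ - α) * m}
      ≤ Real.exp (-2 * α^2 * m) := by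
  have hsum := fun x c => one_sum n k hk hkn x π c
  have hu0 : 0 < ((2:ℝ)^k)⁻¹ := by positivity
  have hu1 : ((2:ℝ)^k)⁻¹ ≤ 1 := inv_le_one_of_one_le₀ (one_le_pow₀ (by norm_num))
  have hp0 : 0 ≤ (1 - ((2:ℝ)^k)⁻¹) + π * ((2:ℝ)^k)⁻¹ := by nlinarith
  have hp1 : (1 - ((2:ℝ)^k)⁻¹) + π * ((2:ℝ)^k)⁻¹ ≤ 1 := by nlinarith
  generalize (1 - ((2:ℝ)^k)⁻¹) + π * ((2:ℝ)^k)⁻¹ = p at *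
  set t : ℝ := 4 * α with ht
  have hq := fun x W => qxpi_nonneg n k x π hπ0 hπ1 W
  have key : ∀ x : F2n n, ∑ V : Fin m → Flat n k,
      (∏ j, qxpi n k x π (V j)) * Real.exp (t * ((p - α) * m) + -t * satCount n k m V x)
      ≤ Real.exp (-2 * α^2 * m) := by
    intro x
    have e1 : ∀ V : Fin m → Flat n k,
        (∏ j, qxpi n k x π (V j)) * Real.exp (t * ((p - α) * m) + -t * satCount n k m V x)
        = Real.exp (t * ((p - α) * m)) *
          ∏ j, (qxpi n k x π (V j) * (if x ∈ (V j).1 then 1 else Real.exp (-t))) := by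
      intro V
      rw [Real.exp_add, exp_sat, Finset.prod_mul_distrib]; ring
    rw [Finset.sum_congr rfl (fun V _ => e1 V), ← Finset.mul_sum]
    have e2 := (Finset.prod_univ_sum (fun _ : Fin m => (Finset.univ : Finset (Flat n k)))
      (fun _ W => qxpi n k x π W * (if x ∈ W.1 then 1 else Real.exp (-t)))).symm
    rw [Fintype.piFinset_univ] at e2
    rw [e2, Finset.prod_const, hsum, Finset.card_univ, Fintype.card_fin]
    have hb := bern_mgf p t hp0 hp1
    have hnn : 0 ≤ (1 - p) + p * Real.exp (-t) := by
      have := (Real.exp_pos (-t)).le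
      have : 0 ≤ 1 - p := by linarith
      positivity
    calc _ ≤ Real.exp (t * ((p - α) * m)) * (Real.exp (-t * p + t ^ 2 / 8)) ^ m := by
          gcongr
      _ = _ := by
          rw [← Real.exp_nat_mul, ← Real.exp_add, ht]; congr 1; ring
  unfold prob
  have step : ∀ V : Fin m → Flat n k,
      (if V ∈ {V | (maxSat n k m V : ℝ) < (p - α) * m} then Pplantedpi n k m π V else 0)
      ≤ ((2:ℝ)^n)⁻¹ * ∑ x : F2n n, (∏ j, qxpi n k x π (V j)) *
        Real.exp (t * ((p - α) * m) + -t * satCount n k m V x) := by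
    intro V
    split_ifs with h
    · unfold Pplantedpi
      gcongr with x
      refine le_mul_of_one_le_right (Finset.prod_nonneg fun j _ => hq x _) ?_
      rw [Real.one_le_exp_iff]
      have h1 : satCount n k m V x ≤ maxSat n k m V :=
        Finset.le_sup (f := fun x : F2n n => satCount n k m V x) (Finset.mem_univ x)
      have h2 : (satCount n k m V x : ℝ) ≤ maxSat n k m V := by exact_mod_cast h1
      have h3 : (maxSat n k m V : ℝ) < (p - α) * m := h
      have ht0 : 0 ≤ t := by positivity
      nlinarith [mul_nonneg ht0 (sub_nonneg.2 (h2.trans h3.le))]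
    · refine mul_nonneg (by positivity) (Finset.sum_nonneg fun x _ => ?_)
      exact mul_nonneg (Finset.prod_nonneg fun j _ => hq x _) (Real.exp_pos _).le
  refine (Finset.sum_le_sum fun V _ => step V).trans ?_
  rw [← Finset.mul_sum, Finset.sum_comm]
  calc _ ≤ ((2:ℝ)^n)⁻¹ * ∑ x : F2n n, Real.exp (-2 * α^2 * m) := by
        gcongr with x
        exact key x
    _ = _ := by
        rw [Finset.sum_const, Finset.card_univ]
        have : Fintype.card (F2n n) = 2 ^ n := by simp [F2n]
        rw [this, nsmul_eq_mul]
        push_cast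
        rw [← mul_assoc, inv_mul_cancel₀ (by positivity), one_mul]
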